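/- arXiv:2007.07140 — 2 statements merged into one kernel-verified Lean document; each statement's English description precedes it below -/
import Mathlib

section
/- Let G be a finite simple graph in which every vertex has even degree, and suppose the graph polynomial F_G has a nonzero almost central coefficient. Let k ≥ 2 and H = G □ C_{2k}. Then H is degree/2-plus-one choosable: for every assignment of lists A_w ⊆ ℝ with |A_w| ≥ deg_H(w)/2 + 1 for each vertex w of H, there exists a proper coloring of H choosing each vertex's color from its list (adjacent vertices receive distinct colors). In particular ch(H) ≤ Δ(G)/2 + 2. -/
/-!
By the combinatorial Nullstellensatz it suffices that the graph polynomial of `H = G □ C_{2k}` has a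
nonzero central coefficient, at the exponent `deg_H / 2 = deg_G / 2 + 1` (`centralExponent`).

Expand the factors belonging to the edges of the cycle direction. The choices made for the edges
between two consecutive layers form a state `V → Bool`, and once all states are fixed the layers
separate: a layer between the states `s` and `t` contributes, up to sign, the coefficient of
`F_G` at `deg_G / 2 + t - s`. Hence the central coefficient of `H` is the trace of `M ^ (2k)` for the
matrix `M` of these contributions (`transferMatrix`, `coeff_prodPoly`).

Selecting in every factor of `F_G` the other endpoint reflects exponents about `deg_G / 2` and
multiplies the coefficient by `(-1) ^ |E|`; since `F_G` is homogeneous, nonzero entries of `M` only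
join states of equal weight, for which the signs from the cycle edges agree. So `Mᵀ = ± M`
(`transferMatrix_transpose`). A nonzero almost central coefficient of `F_G` is, up to sign, an entry
of `M`, so `M ≠ 0` (`transferMatrix_ne_zero`). Finally a nonzero real `M` with `Mᵀ = ± M` is not
nilpotent, and `tr (M ^ (2k)) = ± tr ((M ^ k)ᵀ * M ^ k) ≠ 0` (`trace_pow_two_mul_ne_zero`).
-/

open MvPolynomial Finset

/-- An orientation of a simple graph: a finite set of ordered pairs containing,
for each edge `{u, v}` of `G`, exactly one of `(u, v)` and `(v, u)`. -/
structure GraphOrientation {V : Type*} (G : SimpleGraph V) where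
  edges : Finset (V × V)
  adj_of_mem : ∀ e ∈ edges, G.Adj e.1 e.2
  mem_iff_not_swap_mem : ∀ u v : V, G.Adj u v → ((u, v) ∈ edges ↔ (v, u) ∉ edges)

/-- The graph polynomial `∏_{(i,j) ∈ E} (x_j - x_i)` associated to an orientation. -/
noncomputable def graphPoly {V : Type*} {G : SimpleGraph V} (D : GraphOrientation G) :
    MvPolynomial V ℝ :=
  ∏ e ∈ D.edges, (X e.2 - X e.1)

/-- The outdegree of a vertex in an orientation. -/
def GraphOrientation.outDeg {V : Type*} [DecidableEq V] {G : SimpleGraph V}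
    (D : GraphOrientation G) (v : V) : ℕ :=
  (D.edges.filter fun e => e.1 = v).card

/-- `G` is `f`-choosable: any assignment of lists of real colors with `|A_v| ≥ f v`
admits a proper coloring from the lists. -/
def Choosable {V : Type*} (G : SimpleGraph V) (f : V → ℕ) : Prop :=
  ∀ A : V → Finset ℝ, (∀ v, f v ≤ (A v).card) →
    ∃ c : V → ℝ, (∀ v, c v ∈ A v) ∧ ∀ u v : V, G.Adj u v → c u ≠ c v

/-- The list chromatic number. -/
noncomputable def chNumber {V : Type*} (G : SimpleGraph V) : ℕ :=
  sInf {m | Choosable G fun _ => m}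

/-- The Alon–Tarsi number: the least `k` such that the graph polynomial has a
monomial `x^d` with nonzero coefficient and `max_v d_v = k - 1`. -/
noncomputable def ATNumber {V : Type*} (G : SimpleGraph V) : ℕ :=
  sInf {k | ∃ (D : GraphOrientation G) (d : V →₀ ℕ),
    MvPolynomial.coeff d (graphPoly D) ≠ 0 ∧ d.support.sup d + 1 = k}

instance {α β : Type*} {G : SimpleGraph α} {H : SimpleGraph β}
    [DecidableEq α] [DecidableEq β] [DecidableRel G.Adj] [DecidableRel H.Adj] :
    DecidableRel (G.boxProd H).Adj :=
  fun _ _ => decidable_of_iff _ SimpleGraph.boxProd_adj.symm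

/-! ### Cyclic sums and powers of (anti)symmetric matrices -/

theorem matrix_pow_apply_eq_sum {S : Type*} [Fintype S] [DecidableEq S]
    (M : Matrix S S ℝ) (n : ℕ) (a b : S) :
    (M ^ (n + 1)) a b =
      ∑ p : Fin n → S, ∏ i : Fin (n + 1),
        M (Fin.cons (α := fun _ => S) a p i) (Fin.snoc (α := fun _ => S) p b i) := by
  induction n generalizing a with
  | zero => simp [Fin.snoc]
  | succ n ih =>
    rw [pow_succ', Matrix.mul_apply, ← (Fin.consEquiv fun _ => S).sum_comp, Fintype.sum_prod_type]
    refine Finset.sum_congr rfl fun x _ => ?_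
    rw [ih, Finset.mul_sum]
    refine Finset.sum_congr rfl fun p _ => ?_
    rw [Fin.prod_univ_succ (n := n + 1)]
    simp only [Fin.consEquiv, Equiv.coe_fn_mk, Fin.cons_zero, Fin.cons_succ,
      ← Fin.cons_snoc_eq_snoc_cons]

/-- The trace of a matrix power is the sum of weights of closed walks. -/
theorem sum_cyclic_eq_trace_pow {S : Type*} [Fintype S] [DecidableEq S]
    (M : Matrix S S ℝ) (n : ℕ) :
    ∑ s : Fin (n + 1) → S, ∏ i, M (s i) (s (i + 1)) = (M ^ (n + 1)).trace := by
  rw [Matrix.trace, ← (Fin.consEquiv fun _ => S).sum_comp, Fintype.sum_prod_type]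
  refine Finset.sum_congr rfl fun a _ => ?_
  rw [Matrix.diag_apply, matrix_pow_apply_eq_sum]
  refine Finset.sum_congr rfl fun p _ => Finset.prod_congr rfl fun i _ => ?_
  congr 1
  refine Fin.lastCases ?_ (fun j => ?_) i
  · simp [Fin.consEquiv]
  · simp [Fin.consEquiv]

theorem transpose_pow_eq_smul {S : Type*} [Fintype S] [DecidableEq S] {M : Matrix S S ℝ}
    {ε : ℝ} (h : M.transpose = ε • M) (n : ℕ) : (M ^ n).transpose = ε ^ n • M ^ n := by
  rw [Matrix.transpose_pow, h, smul_pow]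

/-- A nonzero real matrix proportional to its transpose is not nilpotent: if `Aᵀ = c • A` and
`A ^ 2 = 0`, then `Aᵀ * A = 0` and `A = 0`. Apply this to the powers `A = M ^ (2 ^ j)`. -/
theorem pow_ne_zero_of_transpose_eq_smul {S : Type*} [Fintype S] [DecidableEq S]
    {M : Matrix S S ℝ} {ε : ℝ} (h : M.transpose = ε • M) (hM : M ≠ 0) (n : ℕ) : M ^ n ≠ 0 := by
  have key : ∀ j : ℕ, M ^ (2 ^ j) ≠ 0 := by
    intro j
    induction j with
    | zero => simpa using hM
    | succ j ih =>
      intro h0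
      apply ih
      rw [← Matrix.conjTranspose_mul_self_eq_zero, Matrix.conjTranspose_eq_transpose_of_trivial,
        transpose_pow_eq_smul h, Matrix.smul_mul, ← pow_add, ← two_mul, ← pow_succ', h0, smul_zero]
  intro h0
  exact key n (pow_eq_zero_of_le Nat.lt_two_pow_self.le h0)

theorem trace_pow_two_mul_ne_zero {S : Type*} [Fintype S] [DecidableEq S]
    {M : Matrix S S ℝ} {ε : ℝ} (h : M.transpose = ε • M) (hM : M ≠ 0) (k : ℕ) :
    (M ^ (2 * k)).trace ≠ 0 := by
  intro h0
  apply pow_ne_zero_of_transpose_eq_smul h hM k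
  rw [← Matrix.trace_conjTranspose_mul_self_eq_zero_iff,
    Matrix.conjTranspose_eq_transpose_of_trivial, transpose_pow_eq_smul h, Matrix.smul_mul,
    ← pow_add, ← two_mul, Matrix.trace_smul, h0, smul_zero]

/-! ### The reversal symmetry of the graph polynomial -/

/-- The exponent vector of the monomial obtained by selecting from the factor `X e.2 - X e.1` the
variable `X e.1` for `e ∈ T` and `X e.2` for `e ∈ E \ T`. -/
noncomputable def selectExponent {V : Type*} [DecidableEq V] (E T : Finset (V × V)) : V →₀ ℕ :=
  ∑ e ∈ E \ T, Finsupp.single e.2 1 + ∑ e ∈ T, Finsupp.single e.1 1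

theorem coeff_monomial_mul_prod {V : Type*} [DecidableEq V] (E : Finset (V × V))
    (c μ : V →₀ ℕ) :
    coeff μ (monomial c (1 : ℝ) * ∏ e ∈ E, (X e.2 - X e.1)) =
      ∑ T ∈ E.powerset, if c + selectExponent E T = μ then (-1 : ℝ) ^ #T else 0 := by
  rw [Finset.prod_sub, Finset.mul_sum, coeff_sum]
  refine Finset.sum_congr rfl fun T _ => ?_
  have : monomial c (1 : ℝ) * ((-1) ^ #T * (∏ e ∈ E \ T, X e.2) * ∏ e ∈ T, X e.1) =
      monomial (c + selectExponent E T) ((-1 : ℝ) ^ #T) := by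
    have h1 : ((-1) ^ #T : MvPolynomial V ℝ) = C ((-1) ^ #T) := by simp
    simp only [h1, X, selectExponent, ← monomial_sum_one, monomial_mul, C_mul_monomial,
      mul_one, one_mul]
  rw [this, coeff_monomial]

theorem selectExponent_add_compl {V : Type*} [DecidableEq V] {E T : Finset (V × V)} (h : T ⊆ E) :
    selectExponent E T + selectExponent E (E \ T) =
      ∑ e ∈ E, (Finsupp.single e.1 1 + Finsupp.single e.2 1) := by
  rw [selectExponent, selectExponent, Finset.sdiff_sdiff_eq_self h, Finset.sum_add_distrib,
    ← Finset.sum_sdiff h (f := fun e : V × V => Finsupp.single e.1 1),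
    ← Finset.sum_sdiff h (f := fun e : V × V => Finsupp.single e.2 1)]
  abel

theorem degree_selectExponent {V : Type*} [DecidableEq V] {E T : Finset (V × V)} (h : T ⊆ E) :
    (selectExponent E T).degree = #E := by
  simp only [selectExponent, map_add, map_sum, Finsupp.degree_single, Finset.sum_const,
    smul_eq_mul, mul_one]
  exact Finset.card_sdiff_add_card_eq_card h

/-- Complementing the set of selected endpoints reflects exponents about the half degree sequence
and multiplies the sign by `(-1) ^ #E`. -/
theorem coeff_monomial_mul_prod_reverse {V : Type*} [DecidableEq V] (E : Finset (V × V))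
    (c c' μ : V →₀ ℕ)
    (h : c + c' + ∑ e ∈ E, (Finsupp.single e.1 1 + Finsupp.single e.2 1) = μ + μ) :
    coeff μ (monomial c' (1 : ℝ) * ∏ e ∈ E, (X e.2 - X e.1)) =
      (-1) ^ #E * coeff μ (monomial c (1 : ℝ) * ∏ e ∈ E, (X e.2 - X e.1)) := by
  rw [coeff_monomial_mul_prod, coeff_monomial_mul_prod, Finset.mul_sum]
  refine Finset.sum_nbij' (fun T => E \ T) (fun T => E \ T) (by simp) (by simp)
    (fun T hT => Finset.sdiff_sdiff_eq_self (Finset.mem_powerset.1 hT))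
    (fun T hT => Finset.sdiff_sdiff_eq_self (Finset.mem_powerset.1 hT)) fun T hT => ?_
  have hT := Finset.mem_powerset.1 hT
  have hiff : c' + selectExponent E T = μ ↔ c + selectExponent E (E \ T) = μ := by
    rw [← selectExponent_add_compl hT] at h
    constructor <;> intro h'
    · rw [← h'] at h ⊢
      ext v
      have := DFunLike.congr_fun h v
      simp only [Finsupp.add_apply] at this ⊢
      omega
    · rw [← h'] at h ⊢
      ext v
      have := DFunLike.congr_fun h v
      simp only [Finsupp.add_apply] at this ⊢
      omega
  simp only [hiff, mul_ite, mul_zero]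
  congr 1
  rw [← Finset.card_sdiff_add_card_eq_card hT, pow_add, mul_right_comm, ← mul_pow]
  simp

theorem sum_single_edges_apply {V : Type*} [Fintype V] [DecidableEq V] {G : SimpleGraph V}
    [DecidableRel G.Adj] (D : GraphOrientation G) (v : V) :
    (∑ e ∈ D.edges, (Finsupp.single e.1 1 + Finsupp.single e.2 1) : V →₀ ℕ) v = G.degree v := by
  rw [Finsupp.finsetSum_apply]
  simp only [Finsupp.add_apply, Finsupp.single_apply, Finset.sum_add_distrib,
    Finset.sum_boole, Nat.cast_id]
  rw [← G.card_neighborFinset_eq_degree,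
    ← Finset.card_filter_add_card_filter_not (s := G.neighborFinset v)
      (fun u => (v, u) ∈ D.edges)]
  congr 1
  · refine Finset.card_nbij' (fun e => e.2) (fun u => (v, u)) ?_ ?_ ?_ ?_
    · rintro ⟨a, b⟩ h
      simp only [Finset.coe_filter, Set.mem_ofPred_eq] at h ⊢
      obtain ⟨h, rfl⟩ := h
      exact ⟨by simpa using D.adj_of_mem _ h, h⟩
    · intro u h
      simp_all
    · rintro ⟨a, b⟩ h
      simp_all
    · simp [Set.LeftInvOn]
  · refine Finset.card_nbij' (fun e => e.1) (fun u => (u, v)) ?_ ?_ ?_ ?_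
    · rintro ⟨a, b⟩ h
      simp only [Finset.coe_filter, Set.mem_ofPred_eq] at h ⊢
      obtain ⟨h, rfl⟩ := h
      have := D.adj_of_mem _ h
      exact ⟨by simpa using this.symm, (D.mem_iff_not_swap_mem _ _ this).1 h⟩
    · intro u h
      simp only [Finset.coe_filter, Set.mem_ofPred_eq, SimpleGraph.mem_neighborFinset] at h ⊢
      exact ⟨(D.mem_iff_not_swap_mem _ _ h.1.symm).2 h.2, trivial⟩
    · rintro ⟨a, b⟩ h
      simp_all
    · simp [Set.LeftInvOn]

/-! ### The transfer matrix -/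

/-- The exponents which one layer of the product receives from the cycle edges: `s v` tells that the
edge entering the layer at `v` selects its endpoint in the layer, and `t v` that the edge leaving it
at `v` selects its other endpoint. -/
noncomputable def cycleExponent {V : Type*} [Fintype V] (s t : V → Bool) : V →₀ ℕ :=
  Finsupp.equivFunOnFinite.symm fun v => (s v).toNat + (!t v).toNat

/-- The sign `(-1) ^ #{v | t v = false}`. -/
def stateSign {V : Type*} [Fintype V] (t : V → Bool) : ℝ :=
  ∏ v, if t v then 1 else -1

/-- The exponent of the central coefficient of `G □ C_n` in one layer. -/
noncomputable def centralExponent {V : Type*} [Fintype V] (G : SimpleGraph V)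
    [DecidableRel G.Adj] : V →₀ ℕ :=
  Finsupp.equivFunOnFinite.symm fun v => G.degree v / 2 + 1

/-- The contribution of one layer once the endpoints selected by the adjacent cycle edges are
fixed. -/
noncomputable def layerPoly {V : Type*} [Fintype V] {G : SimpleGraph V}
    (D : GraphOrientation G) (s t : V → Bool) : MvPolynomial V ℝ :=
  monomial (cycleExponent s t) (stateSign t) * graphPoly D

/-- The transfer matrix, indexed by the states of the edges between two consecutive layers. -/
noncomputable def transferMatrix {V : Type*} [Fintype V] {G : SimpleGraph V}
    [DecidableRel G.Adj] (D : GraphOrientation G) : Matrix (V → Bool) (V → Bool) ℝ :=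
  fun s t => coeff (centralExponent G) (layerPoly D s t)

theorem transferMatrix_apply {V : Type*} [Fintype V] {G : SimpleGraph V}
    [DecidableRel G.Adj] (D : GraphOrientation G) (s t : V → Bool) :
    transferMatrix D s t = stateSign t * coeff (centralExponent G)
      (monomial (cycleExponent s t) (1 : ℝ) * ∏ e ∈ D.edges, (X e.2 - X e.1)) := by
  rw [transferMatrix, layerPoly, graphPoly, ← coeff_C_mul, ← mul_assoc, C_mul_monomial, mul_one]

theorem stateSign_eq {V : Type*} [Fintype V] (t : V → Bool) :
    stateSign t = (-1) ^ (∑ v, (!t v).toNat) := by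
  rw [stateSign, ← Finset.prod_pow_eq_pow_sum]
  refine Finset.prod_congr rfl fun v _ => ?_
  cases t v <;> simp

theorem stateSign_ne_zero {V : Type*} [Fintype V] (t : V → Bool) : stateSign t ≠ 0 := by
  rw [stateSign_eq]
  exact pow_ne_zero _ (by norm_num)

theorem cycleExponent_add_swap {V : Type*} [Fintype V] [DecidableEq V] {G : SimpleGraph V}
    [DecidableRel G.Adj] (hEven : ∀ v, Even (G.degree v)) (D : GraphOrientation G)
    (s t : V → Bool) :
    cycleExponent s t + cycleExponent t s +
        ∑ e ∈ D.edges, (Finsupp.single e.1 1 + Finsupp.single e.2 1) =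
      centralExponent G + centralExponent G := by
  ext v
  rw [Finsupp.add_apply, sum_single_edges_apply D v]
  obtain ⟨m, hm⟩ := hEven v
  simp only [cycleExponent, centralExponent, Finsupp.add_apply,
    Finsupp.equivFunOnFinite_symm_apply_apply, hm]
  cases s v <;> cases t v <;> simp <;> omega

/-- Nonzero entries of the transfer matrix join states of equal weight, so the signs of the two
states agree there; off the signs, the symmetry is the reversal symmetry of the graph
polynomial. -/
theorem transferMatrix_transpose {V : Type*} [Fintype V] [DecidableEq V] {G : SimpleGraph V}
    [DecidableRel G.Adj] (hEven : ∀ v, Even (G.degree v)) (D : GraphOrientation G) :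
    (transferMatrix D).transpose = ((-1 : ℝ) ^ #D.edges) • transferMatrix D := by
  ext s t
  rw [Matrix.transpose_apply, Matrix.smul_apply, transferMatrix_apply, transferMatrix_apply,
    smul_eq_mul]
  have hsum := cycleExponent_add_swap hEven D s t
  rw [coeff_monomial_mul_prod_reverse D.edges _ _ _ hsum]
  by_cases h0 : coeff (centralExponent G)
      (monomial (cycleExponent s t) (1 : ℝ) * ∏ e ∈ D.edges, (X e.2 - X e.1)) = 0
  · simp [h0]
  suffices h : stateSign s = stateSign t by rw [h]; ring
  rw [coeff_monomial_mul_prod] at h0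
  obtain ⟨T, hT, hT0⟩ := Finset.exists_ne_zero_of_sum_ne_zero h0
  have hT := Finset.mem_powerset.1 hT
  have hμ : cycleExponent s t + selectExponent D.edges T = centralExponent G := by
    by_contra hne
    simp [hne] at hT0
  rw [← hμ, ← selectExponent_add_compl hT] at hsum
  have hdeg := congrArg Finsupp.degree hsum
  simp only [map_add, degree_selectExponent hT, degree_selectExponent Finset.sdiff_subset] at hdeg
  have hcyc : ∀ s t : V → Bool, (cycleExponent s t).degree + ∑ v, (!s v).toNat =
      Fintype.card V + ∑ v, (!t v).toNat := by
    intro s t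
    rw [Finsupp.degree_eq_sum, ← Finset.sum_add_distrib, Fintype.card_eq_sum_ones,
      ← Finset.sum_add_distrib]
    refine Finset.sum_congr rfl fun v _ => ?_
    simp only [cycleExponent, Finsupp.equivFunOnFinite_symm_apply_apply]
    cases s v <;> cases t v <;> rfl
  have h1 := hcyc s t
  have h2 := hcyc t s
  rw [stateSign_eq, stateSign_eq]
  congr 1
  omega

/-- An almost central exponent `ξ` differs from the half degree by `t - s` for some states `s`,
`t`. -/
theorem transferMatrix_ne_zero {V : Type*} [Fintype V] {G : SimpleGraph V}
    [DecidableRel G.Adj] (hEven : ∀ v, Even (G.degree v)) (D : GraphOrientation G) (ξ : V →₀ ℕ)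
    (hne : coeff ξ (graphPoly D) ≠ 0)
    (hac : ∀ v, |2 * (ξ v : ℤ) - (G.degree v : ℤ)| ≤ 2) : transferMatrix D ≠ 0 := by
  intro h0
  set s : V → Bool := fun v => decide (2 * ξ v + 2 = G.degree v) with hs
  set t : V → Bool := fun v => decide (2 * ξ v = G.degree v + 2) with ht
  have hμ : centralExponent G = cycleExponent s t + ξ := by
    ext v
    obtain ⟨m, hm⟩ := hEven v
    have hv := abs_le.1 (hac v)
    simp only [cycleExponent, centralExponent, Finsupp.add_apply,
      Finsupp.equivFunOnFinite_symm_apply_apply, hs, ht]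
    by_cases h1 : 2 * ξ v + 2 = G.degree v
    · have h2 : ¬ 2 * ξ v = G.degree v + 2 := by omega
      simp [h1, h2]
      omega
    · by_cases h2 : 2 * ξ v = G.degree v + 2
      · have h3 : ¬ G.degree v + 2 + 2 = G.degree v := by omega
        simp [h2, h3]
        omega
      · simp [h1, h2]
        omega
  have h := congrFun (congrFun h0 s) t
  rw [transferMatrix, layerPoly, hμ, coeff_monomial_mul] at h
  exact mul_ne_zero (stateSign_ne_zero t) hne h

/-! ### The product polynomial -/

theorem sum_mapDomain_apply {V ι : Type*} [Fintype ι] [DecidableEq ι]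
    (e : ι → V →₀ ℕ) (v : V) (i : ι) :
    (∑ j, (e j).mapDomain fun v => (v, j)) (v, i) = e i v := by
  rw [Finsupp.finsetSum_apply, Finset.sum_eq_single i]
  · exact Finsupp.mapDomain_apply (fun a b h => (Prod.ext_iff.1 h).1) _ _
  · intro j _ hj
    refine Finsupp.mapDomain_of_notMem_range _ _ ?_
    rintro ⟨x, hx⟩
    exact hj (Prod.ext_iff.1 hx).2
  · simp

/-- Coefficients of a product of polynomials in disjoint sets of variables. -/
theorem coeff_prod_rename {V ι : Type*} [Fintype ι] [DecidableEq ι]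
    (Q : ι → MvPolynomial V ℝ) (e : ι → V →₀ ℕ) :
    coeff (∑ i, (e i).mapDomain fun v => (v, i)) (∏ i, rename (fun v => (v, i)) (Q i)) =
      ∏ i, coeff (e i) (Q i) := by
  classical
  have h : ∀ i, rename (fun v => (v, i)) (Q i) = ∑ m ∈ (Q i).support,
      monomial (m.mapDomain fun v => (v, i)) (coeff m (Q i)) := by
    intro i
    conv_lhs => rw [(Q i).as_sum, map_sum]
    simp_rw [rename_monomial]
  simp_rw [h]
  rw [Finset.prod_univ_sum, coeff_sum]
  simp_rw [← monomial_sum_prod, coeff_monomial]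
  rw [Finset.sum_eq_single e]
  · simp
  · intro p _ hp
    rw [if_neg]
    intro heq
    apply hp
    ext i v
    rw [← sum_mapDomain_apply p, heq, sum_mapDomain_apply]
  · intro he
    simp only [Fintype.mem_piFinset, not_forall, notMem_support_iff] at he
    obtain ⟨i, hi⟩ := he
    rw [if_pos rfl]
    exact Finset.prod_eq_zero (Finset.mem_univ i) hi

/-- The graph polynomial of `G □ C_{n+1}`: the layers carry copies of the polynomial of `G`, and the
edges of the cycle direction lead from layer `i` to layer `i + 1`. -/
noncomputable def prodPoly {V : Type*} [Fintype V] {G : SimpleGraph V} (D : GraphOrientation G)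
    (n : ℕ) : MvPolynomial (V × Fin (n + 1)) ℝ :=
  (∏ i, rename (fun v => (v, i)) (graphPoly D)) *
    ∏ i : Fin (n + 1), ∏ v, (X (v, i + 1) - X (v, i))

theorem rename_layerPoly {V : Type*} [Fintype V] {G : SimpleGraph V} (D : GraphOrientation G)
    {n : ℕ} (i : Fin (n + 1)) (s t : V → Bool) :
    rename (fun v => (v, i)) (layerPoly D s t) =
      rename (fun v => (v, i)) (graphPoly D) * ((∏ v, if s v then X (v, i) else 1) *
        ∏ v, if t v then 1 else -X (v, i)) := by
  classical
  have h : monomial (cycleExponent s t) (stateSign t) =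
      ∏ v, ((if s v then X v else 1) * if t v then 1 else -X v : MvPolynomial V ℝ) := by
    have h1 : cycleExponent s t = ∑ v, Finsupp.single v ((s v).toNat + (!t v).toNat) := by
      ext v
      simp only [cycleExponent, Finsupp.finsetSum_apply, Finsupp.single_apply,
        Finsupp.equivFunOnFinite_symm_apply_apply, Finset.sum_ite_eq', Finset.mem_univ, if_true]
    rw [h1, stateSign, monomial_sum_prod]
    refine Finset.prod_congr rfl fun v _ => ?_
    have h2 : (monomial (Finsupp.single v 1) (-1 : ℝ)) = -X v := by simp [X]
    have h3 : (monomial (Finsupp.single v 2) (-1 : ℝ)) = -(X v * X v) := by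
      simp [X, monomial_mul, ← Finsupp.single_add]
    cases s v <;> cases t v <;> simp [h2, h3, X]
  rw [layerPoly, h, map_mul, map_prod, mul_comm, ← Finset.prod_mul_distrib]
  congr 1
  refine Finset.prod_congr rfl fun v _ => ?_
  cases s v <;> cases t v <;> simp

theorem prodPoly_eq_sum {V : Type*} [Fintype V] [DecidableEq V] {G : SimpleGraph V}
    (D : GraphOrientation G) (n : ℕ) :
    prodPoly D n = ∑ s : Fin (n + 1) → V → Bool,
      ∏ i, rename (fun v => (v, i)) (layerPoly D (s (i - 1)) (s i)) := by
  have h : ∀ i : Fin (n + 1), ∏ v : V, (X (v, i + 1) - X (v, i) : MvPolynomial _ ℝ) =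
      ∑ s : V → Bool, (∏ v, if s v then X (v, i + 1) else 1) * ∏ v, if s v then 1 else -X (v, i) := by
    intro i
    have h1 : ∀ v : V, (X (v, i + 1) - X (v, i) : MvPolynomial (V × Fin (n + 1)) ℝ) =
        ∑ b : Bool, (if b then X (v, i + 1) else 1) * if b then 1 else -X (v, i) := by
      intro v
      simp [sub_eq_add_neg]
    simp_rw [h1, Fintype.prod_sum, Finset.prod_mul_distrib]
  rw [prodPoly]
  simp_rw [h, Fintype.prod_sum, rename_layerPoly, Finset.prod_mul_distrib, Finset.mul_sum]
  refine Finset.sum_congr rfl fun s _ => ?_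
  congr 2
  rw [← (Equiv.subRight (1 : Fin (n + 1))).prod_comp]
  simp

theorem coeff_prodPoly {V : Type*} [Fintype V] [DecidableEq V] {G : SimpleGraph V}
    [DecidableRel G.Adj] (D : GraphOrientation G) (n : ℕ) :
    coeff (∑ i, (centralExponent G).mapDomain fun v => (v, i)) (prodPoly D n) =
      (transferMatrix D ^ (n + 1)).trace := by
  rw [prodPoly_eq_sum, coeff_sum, ← sum_cyclic_eq_trace_pow]
  refine Finset.sum_congr rfl fun s _ => ?_
  rw [coeff_prod_rename fun i => layerPoly D (s (i - 1)) (s i),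
    ← Equiv.prod_comp (Equiv.addRight (1 : Fin (n + 1)))]
  simp [transferMatrix]

theorem prodPoly_isHomogeneous {V : Type*} [Fintype V] {G : SimpleGraph V}
    (D : GraphOrientation G) (n : ℕ) : ∃ d, (prodPoly D n).IsHomogeneous d := by
  have hF : (graphPoly D).IsHomogeneous (∑ _e ∈ D.edges, 1) :=
    IsHomogeneous.prod _ _ _ fun e _ => (isHomogeneous_X _ _).sub (isHomogeneous_X _ _)
  exact ⟨_, (IsHomogeneous.prod _ _ _ fun i _ => hF.rename_isHomogeneous).mul
    (IsHomogeneous.prod _ _ _ fun i _ => IsHomogeneous.prod _ _ _ fun v _ =>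
      (isHomogeneous_X _ _).sub (isHomogeneous_X _ _))⟩

theorem ne_of_eval_prodPoly_ne_zero {V : Type*} [Fintype V] {G : SimpleGraph V}
    (D : GraphOrientation G) {n : ℕ} {c : V × Fin (n + 2) → ℝ}
    (hc : eval c (prodPoly D (n + 1)) ≠ 0) (u w : V × Fin (n + 2))
    (h : (G.boxProd (SimpleGraph.cycleGraph (n + 2))).Adj u w) : c u ≠ c w := by
  rw [prodPoly, map_mul, map_prod, map_prod] at hc
  obtain ⟨hG, hC⟩ := mul_ne_zero_iff.1 hc
  have hG' : ∀ i, ∀ e ∈ D.edges, c (e.2, i) ≠ c (e.1, i) := by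
    intro i e he heq
    refine Finset.prod_ne_zero_iff.1 hG i (Finset.mem_univ i) ?_
    rw [graphPoly, map_prod, map_prod]
    exact Finset.prod_eq_zero he (by simp [heq])
  have hC' : ∀ i v, c (v, i + 1) ≠ c (v, i) := by
    intro i v heq
    refine Finset.prod_ne_zero_iff.1 hC i (Finset.mem_univ i) ?_
    rw [map_prod]
    exact Finset.prod_eq_zero (Finset.mem_univ v) (by simp [heq])
  obtain ⟨u, i⟩ := u
  obtain ⟨w, j⟩ := w
  rw [SimpleGraph.boxProd_adj] at h
  rcases h with ⟨h, hij⟩ | ⟨h, huw⟩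
  · obtain rfl : i = j := hij
    by_cases hm : (u, w) ∈ D.edges
    · exact (hG' i _ hm).symm
    · exact hG' i _ ((D.mem_iff_not_swap_mem _ _ h.symm).2 hm)
  · obtain rfl : u = w := huw
    rw [SimpleGraph.cycleGraph_adj, sub_eq_iff_eq_add', sub_eq_iff_eq_add'] at h
    rcases h with h | h
    · obtain rfl : i = j + 1 := h
      exact hC' j u
    · obtain rfl : j = i + 1 := h
      exact (hC' i u).symm

/-- If all degrees of `G` are even and the graph polynomial of `G`
(w.r.t. some fixed orientation) has a nonzero almost central coefficient, then for
every `k ≥ 2` the graph `H = G □ C_{2k}` is `(deg_H/2 + 1)`-choosable; in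
particular `ch(H) ≤ Δ(G)/2 + 2`. -/
theorem stmt2 {V : Type*} [Fintype V] [DecidableEq V] (G : SimpleGraph V)
    [DecidableRel G.Adj]
    (hEven : ∀ v, Even (G.degree v))
    (D : GraphOrientation G) (ξ : V →₀ ℕ)
    (hne : MvPolynomial.coeff ξ (graphPoly D) ≠ 0)
    (hac : ∀ v, |2 * (ξ v : ℤ) - (G.degree v : ℤ)| ≤ 2)
    (k : ℕ) (hk : 2 ≤ k) :
    Choosable (G.boxProd (SimpleGraph.cycleGraph (2 * k)))
        (fun w => (G.boxProd (SimpleGraph.cycleGraph (2 * k))).degree w / 2 + 1) ∧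
      chNumber (G.boxProd (SimpleGraph.cycleGraph (2 * k))) ≤ G.maxDegree / 2 + 2 := by
  obtain ⟨n, hn⟩ : ∃ n, 2 * k = n + 3 := ⟨2 * k - 3, by omega⟩
  have htr := trace_pow_two_mul_ne_zero (transferMatrix_transpose hEven D)
    (transferMatrix_ne_zero hEven D ξ hne hac) k
  generalize 2 * k = N at hn htr
  subst hn
  have hdeg : ∀ w, (G.boxProd (SimpleGraph.cycleGraph (n + 3))).degree w = G.degree w.1 + 2 := by
    intro w
    rw [SimpleGraph.degree_boxProd, SimpleGraph.cycleGraph_degree_three_le]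
  have hch : Choosable (G.boxProd (SimpleGraph.cycleGraph (n + 3)))
      (fun w => (G.boxProd (SimpleGraph.cycleGraph (n + 3))).degree w / 2 + 1) := by
    intro A hA
    rw [← coeff_prodPoly] at htr
    obtain ⟨d, hd⟩ := prodPoly_isHomogeneous D (n + 2)
    have htot := hd.totalDegree (ne_zero_iff.2 ⟨_, htr⟩)
    rw [← hd htr] at htot
    replace htot := htot.trans (DFunLike.congr_fun Finsupp.degree_eq_weight_one _).symm
    obtain ⟨c, hcA, hc⟩ := combinatorial_nullstellensatz_exists_eval_nonzero _ _ htr htot A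
      (by
        rintro ⟨v, i⟩
        have h := hA (v, i)
        simp only [hdeg] at h
        rw [sum_mapDomain_apply, centralExponent, Finsupp.equivFunOnFinite_symm_apply_apply]
        omega)
    exact ⟨c, hcA, ne_of_eval_prodPoly_ne_zero D hc⟩
  refine ⟨hch, Nat.sInf_le fun A hA => hch A fun w => (le_trans ?_ (hA w))⟩
  have h := G.degree_le_maxDegree w.1
  simp only [hdeg]
  omega
end

section
/- For every integer n ≥ 3 and every integer k ≥ 2, the Cartesian product of the complete graph K_n and the even cycle C_{2k} satisfies AT(K_n □ C_{2k}) = ch(K_n □ C_{2k}) = n. -/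
/-!
The clique `K_n` forces `n ≤ ch`, and the combinatorial Nullstellensatz gives `ch ≤ AT`, so the
theorem amounts to one monomial with exponents at most `n - 1` and nonzero coefficient in the graph
polynomial of `K_n □ C_{2k}`.

Expanding each copy of `K_n` as a Vandermonde determinant and each cycle edge `x - y` into its two
terms turns the coefficient of a monomial `x ^ d` into a sum over closed walks, i.e. into the trace
of a product of transfer matrices, one for each copy of `K_n` (`coeff_graphPoly`,
`trace_walkProd`). A transfer matrix is indexed by the choices made in the cycle edges entering and
leaving the copy, and depends only on the exponents of `d` in that copy.

Let `e = (1, 1, 2, …, n - 3, n - 2, n - 2)` (`baseExp`), whose values lie in `[1, n - 2]` because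
`n ≥ 3`. Give the even copies the exponents `e + 1` and the odd ones the exponents `n - e`, all at
most `n - 1`. If `M` is the transfer matrix of the even copies, that of the odd ones is `± Mᵀ`:
reflecting the Vandermonde exponents by `j ↦ n - 1 - j` swaps entering and leaving choices
(`layerMat_reflect`). As the cycle is even, the coefficient is `± tr ((M Mᵀ) ^ k)`. This is nonzero
because `M Mᵀ` is positive semidefinite and `M ≠ 0`, the latter since one entry of `M` comes from
the identity permutation only (`layerMat_ne_zero`).
-/

open MvPolynomial Finset

/-! ### From a coefficient of the graph polynomial to list colorings -/

/-- The Alon–Tarsi theorem: the graph polynomial is homogeneous, so the combinatorial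
Nullstellensatz applies to each of its monomials. -/
theorem choosable_of_coeff_ne_zero {V : Type*} [Finite V] {G : SimpleGraph V}
    (D : GraphOrientation G) (d : V →₀ ℕ) (hd : coeff d (graphPoly D) ≠ 0) :
    Choosable G fun _ => d.support.sup d + 1 := by
  classical
  intro A hA
  have hom : (graphPoly D).IsHomogeneous (∑ e ∈ D.edges, 1) :=
    IsHomogeneous.prod _ _ _ fun e _ => (isHomogeneous_X ℝ e.2).sub (isHomogeneous_X ℝ e.1)
  have hne : graphPoly D ≠ 0 := fun h => hd (by simp [h])
  have hdeg : d.degree = ∑ e ∈ D.edges, 1 := by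
    by_contra h
    exact hd (hom.coeff_eq_zero h)
  obtain ⟨c, hc, hev⟩ := combinatorial_nullstellensatz_exists_eval_nonzero (graphPoly D) d hd
    (by rw [hom.totalDegree hne, hdeg]) A (fun v => by
      refine lt_of_lt_of_le (Nat.lt_succ_of_le ?_) (hA v)
      by_cases hv : v ∈ d.support
      · exact Finset.le_sup (f := d) hv
      · simp [Finsupp.notMem_support_iff.1 hv])
  refine ⟨c, hc, ?_⟩
  have key : ∀ e ∈ D.edges, c e.1 ≠ c e.2 := by
    intro e he h
    apply hev
    rw [graphPoly, map_prod]
    exact Finset.prod_eq_zero he (by simp [h])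
  intro u v huv
  by_cases h : (u, v) ∈ D.edges
  · exact key _ h
  · exact (key _ ((D.mem_iff_not_swap_mem v u huv.symm).2 h)).symm

/-- A clique on `n` vertices forces lists of length at least `n`: give every vertex the list
`{0, …, m - 1}`. -/
theorem le_of_choosable {V : Type*} {G : SimpleGraph V} {n m : ℕ} (φ : Fin n → V)
    (hφ : ∀ a b, a ≠ b → G.Adj (φ a) (φ b)) (h : Choosable G fun _ => m) : n ≤ m := by
  classical
  obtain ⟨c, hc, hadj⟩ := h (fun _ => (range m).image (fun i : ℕ => (i : ℝ)))
    (fun v => by rw [card_image_of_injective _ Nat.cast_injective, card_range])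
  have := card_le_card_of_injOn (s := (univ : Finset (Fin n)))
    (t := (range m).image (fun i : ℕ => (i : ℝ))) (fun a => c (φ a)) (fun a _ => hc _)
    (fun a _ b _ hab => by
      by_contra hne
      exact hadj _ _ (hφ a b hne) hab)
  simpa [card_image_of_injective _ (Nat.cast_injective (R := ℝ))] using this

/-- If `G` has an `n`-clique, a single nonvanishing coefficient with exponents at most `n - 1`
determines both numbers. -/
theorem at_eq_ch_eq {V : Type*} [Finite V] {G : SimpleGraph V} {n : ℕ} (φ : Fin n → V)
    (hφ : ∀ a b, a ≠ b → G.Adj (φ a) (φ b)) (D : GraphOrientation G) (d : V →₀ ℕ)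
    (hd : coeff d (graphPoly D) ≠ 0) (hle : ∀ v, d v + 1 ≤ n) (hn : 1 ≤ n) :
    ATNumber G = n ∧ chNumber G = n := by
  have hsup : d.support.sup d + 1 = n := by
    refine le_antisymm ?_ (le_of_choosable φ hφ (choosable_of_coeff_ne_zero D d hd))
    have : d.support.sup d ≤ n - 1 := Finset.sup_le fun v _ => by have := hle v; omega
    omega
  constructor
  · refine le_antisymm (Nat.sInf_le ⟨D, d, hd, hsup⟩) ?_
    refine le_csInf ⟨n, D, d, hd, hsup⟩ ?_
    rintro b ⟨D', d', hd', rfl⟩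
    exact le_of_choosable φ hφ (choosable_of_coeff_ne_zero D' d' hd')
  · have hch : Choosable G fun _ => n := hsup ▸ choosable_of_coeff_ne_zero D d hd
    exact le_antisymm (Nat.sInf_le hch)
      (le_csInf ⟨n, hch⟩ fun b hb => le_of_choosable φ hφ hb)

/-! ### Closed walks and traces -/

/-- The product `W 0 * W 1 * ⋯ * W (m - 1)`. -/
def walkProd {ι : Type*} [Fintype ι] [DecidableEq ι] (W : ℕ → Matrix ι ι ℝ) :
    ℕ → Matrix ι ι ℝ
  | 0 => 1
  | m + 1 => walkProd W m * W m

theorem walkProd_apply {ι : Type*} [Fintype ι] [DecidableEq ι] (W : ℕ → Matrix ι ι ℝ) (m : ℕ)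
    (a b : ι) : walkProd W m a b = ∑ f : Fin (m + 1) → ι,
      if f 0 = a ∧ f (Fin.last m) = b then ∏ i : Fin m, W i (f i.castSucc) (f i.succ) else 0 := by
  induction m generalizing b with
  | zero =>
    rw [← (Equiv.funUnique (Fin 1) ι).symm.sum_comp]
    simp only [walkProd, Matrix.one_apply]
    by_cases h : a = b
    · subst h; simp
    · rw [Finset.sum_eq_zero]
      · simp [h]
      · intro x _
        rw [if_neg]
        rintro ⟨h1, h2⟩
        exact h (h1.symm.trans h2)
  | succ m ih =>
    rw [← (Fin.snocEquiv (fun _ : Fin (m + 2) => ι)).sum_comp, Fintype.sum_prod_type]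
    simp only [walkProd, Matrix.mul_apply, ih]
    symm
    rw [Finset.sum_eq_single b]
    rotate_left
    · intro c _ hc
      refine Finset.sum_eq_zero fun f _ => ?_
      rw [if_neg]
      simp [Fin.snocEquiv, hc]
    · simp
    symm
    simp only [Finset.sum_mul]
    rw [Finset.sum_comm]
    refine Finset.sum_congr rfl fun f _ => ?_
    have h0 : (Fin.snoc f b : Fin (m + 2) → ι) 0 = f 0 := by
      rw [← Fin.castSucc_zero, Fin.snoc_castSucc (α := fun _ => ι)]
    rw [Finset.sum_eq_single (f (Fin.last m))]
    · simp only [Fin.snocEquiv, Equiv.coe_fn_mk, Fin.snoc_last, and_true, h0]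
      rw [Fin.prod_univ_castSucc]
      simp only [← Fin.castSucc_succ, Fin.snoc_castSucc (α := fun _ => ι), Fin.succ_last,
        Fin.snoc_last, Fin.val_castSucc, Fin.val_last, ite_mul, zero_mul]
    · intro c _ hc
      rw [if_neg (fun h => hc h.2.symm), zero_mul]
    · simp

theorem trace_walkProd {ι : Type*} [Fintype ι] [DecidableEq ι] (W : ℕ → Matrix ι ι ℝ) (m : ℕ) :
    (walkProd W (m + 1)).trace =
      ∑ f : Fin (m + 1) → ι, ∏ i : Fin (m + 1), W i (f i) (f (i + 1)) := by
  simp only [Matrix.trace, Matrix.diag, walkProd, Matrix.mul_apply, walkProd_apply]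
  simp only [Finset.sum_mul]
  rw [Finset.sum_congr rfl fun a _ => Finset.sum_comm, Finset.sum_comm]
  refine Finset.sum_congr rfl fun f _ => ?_
  rw [Finset.sum_eq_single (f 0), Finset.sum_eq_single (f (Fin.last m))]
  · simp [Fin.prod_univ_castSucc]
  · intro c _ hc
    rw [if_neg (fun h => hc h.2.symm), zero_mul]
  · simp
  · intro c _ hc
    refine Finset.sum_eq_zero fun b _ => ?_
    rw [if_neg (fun h => hc h.1.symm), zero_mul]
  · simp

theorem pow_mul_transpose_trace_ne_zero {ι : Type*} [Fintype ι] [DecidableEq ι]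
    (M : Matrix ι ι ℝ) (hM : M ≠ 0) (k : ℕ) : ((M * M.transpose) ^ k).trace ≠ 0 := by
  rw [← Matrix.conjTranspose_eq_transpose_of_trivial]
  have hpsd := Matrix.posSemidef_self_mul_conjTranspose M
  rw [Ne, (hpsd.pow k).trace_eq_zero_iff]
  have hA : M * M.conjTranspose ≠ 0 := fun h => hM (Matrix.self_mul_conjTranspose_eq_zero.1 h)
  -- A Hermitian matrix is not nilpotent, since `A ^ (2 ^ (j + 1))` is `B * Bᴴ` for
  -- `B = A ^ (2 ^ j)`.
  have hpow : ∀ j : ℕ, (M * M.conjTranspose) ^ (2 ^ j) ≠ 0 := by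
    intro j
    induction j with
    | zero => simpa using hA
    | succ j ih =>
      rw [pow_succ 2 j, mul_comm, two_mul, pow_add]
      intro h
      apply ih
      rw [← Matrix.self_mul_conjTranspose_eq_zero, (hpsd.pow _).isHermitian.eq, h]
  intro h
  exact hpow k (pow_eq_zero_of_le Nat.lt_two_pow_self.le h)

theorem walkProd_alternating {ι : Type*} [Fintype ι] [DecidableEq ι] (M : Matrix ι ι ℝ) (s : ℝ)
    (k : ℕ) : walkProd (fun i => if Even i then M else s • M.transpose) (2 * k) =
      s ^ k • (M * M.transpose) ^ k := by
  induction k with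
  | zero => simp [walkProd]
  | succ k ih =>
    rw [show 2 * (k + 1) = 2 * k + 1 + 1 by ring, walkProd, walkProd, ih]
    rw [if_pos (by simp), if_neg (by simp)]
    simp only [Matrix.smul_mul, Matrix.mul_smul, smul_smul, pow_succ, mul_assoc, mul_comm s]

/-! ### The graph polynomial of `K_n □ C_{m+1}` -/

/-- The orientation of `K_n □ C_{m+1}` in which each copy of `K_n` is oriented upwards and each
copy of the cycle is oriented cyclically. -/
def boxOrientation (n m : ℕ) (hm : 2 ≤ m) :
    GraphOrientation ((⊤ : SimpleGraph (Fin n)).boxProd (SimpleGraph.cycleGraph (m + 1))) where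
  edges := univ.filter fun e =>
    (e.1.1 < e.2.1 ∧ e.1.2 = e.2.2) ∨ (e.1.1 = e.2.1 ∧ e.1.2 = e.2.2 - 1)
  adj_of_mem := by
    obtain ⟨m, rfl⟩ : ∃ l, m = l + 1 := ⟨m - 1, by omega⟩
    rintro ⟨⟨a, i⟩, ⟨b, j⟩⟩ h
    simp only [mem_filter, mem_univ, true_and] at h
    rw [SimpleGraph.boxProd_adj]
    rcases h with ⟨h1, h2⟩ | ⟨h1, h2⟩
    · exact Or.inl ⟨by simpa using h1.ne, h2⟩
    · refine Or.inr ⟨?_, h1⟩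
      rw [SimpleGraph.cycleGraph_adj]
      right
      simp [h2]
  mem_iff_not_swap_mem := by
    obtain ⟨m, rfl⟩ : ∃ l, m = l + 2 := ⟨m - 2, by omega⟩
    rintro ⟨a, i⟩ ⟨b, j⟩ h
    rw [SimpleGraph.boxProd_adj] at h
    simp only [mem_filter, mem_univ, true_and]
    have h2 : (1 : Fin (m + 2 + 1)) + 1 ≠ 0 := by
      intro h
      have := congrArg Fin.val h
      simp [Fin.val_add, Nat.mod_eq_of_lt] at this
    rcases h with ⟨h1, rfl⟩ | ⟨h1, rfl⟩
    · have h1 : a ≠ b := h1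
      simp only [h1, h1.symm, false_and, or_false, and_true]
      constructor
      · exact fun h => not_lt.2 h.le
      · exact fun h => lt_of_le_of_ne (not_lt.1 h) h1
    · rw [SimpleGraph.cycleGraph_adj] at h1
      simp only [lt_irrefl, false_and, true_and, false_or]
      constructor
      · intro h h'
        apply h2
        rw [h'] at h
        have : i - (1 + 1) = i := by rw [← sub_sub]; exact h.symm
        simpa using this
      · intro h
        rcases h1 with h1 | h1
        · exact absurd (by rw [← h1]; abel) h
        · rw [← h1]; abel

theorem graphPoly_boxOrientation (n m : ℕ) (hm : 2 ≤ m) :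
    graphPoly (boxOrientation n m hm) =
      (∏ i : Fin (m + 1), ∏ a : Fin n, ∏ b ∈ Ioi a, (X (b, i) - X (a, i))) *
        ∏ i : Fin (m + 1), ∏ a : Fin n, (X (a, i) - X (a, i - 1)) := by
  simp only [graphPoly, boxOrientation]
  rw [Finset.filter_or, Finset.prod_union]
  · congr 1
    · rw [Finset.prod_filter, Fintype.prod_prod_type, Fintype.prod_prod_type, Finset.prod_comm]
      refine Finset.prod_congr rfl fun i _ => Finset.prod_congr rfl fun a _ => ?_
      rw [Fintype.prod_prod_type]
      simp only [ite_and, Finset.prod_ite_irrel, Finset.prod_const_one, Finset.prod_ite_eq,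
        mem_univ, if_true]
      rw [← Finset.prod_filter]
      congr 1
      ext; simp
    · rw [Finset.prod_filter, Fintype.prod_prod_type_right, Fintype.prod_prod_type_right]
      refine Finset.prod_congr rfl fun i _ => Finset.prod_congr rfl fun a _ => ?_
      rw [Fintype.prod_prod_type]
      simp only [ite_and, Finset.prod_ite_irrel, Finset.prod_const_one, Finset.prod_ite_eq',
        mem_univ, if_true]
  · rw [Finset.disjoint_filter]
    rintro e - h1 h2
    exact h1.1.ne h2.1

/-- The sign with which an endpoint enters `x - y`: `true` selects `x`, `false` selects `-y`. -/
def choiceSign (b : Bool) : ℝ := if b then 1 else -1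

/-- The transfer matrix of a copy of `K_n` in which the exponents `d` are prescribed. Its index
sets are the choices, at each vertex `v`, of a monomial in the factors `x - y` of the cycle edges
entering (`S`) and leaving (`T`) the copy; the entry is the signed number of monomials of the
Vandermonde product that complete these choices to `x ^ d`. -/
noncomputable def layerMat {n : ℕ} (d : Fin n → ℕ) : Matrix (Fin n → Bool) (Fin n → Bool) ℝ :=
  Matrix.of fun S T => (∏ v, choiceSign (S v)) * ∑ π : Equiv.Perm (Fin n),
    ((Equiv.Perm.sign π : ℤ) : ℝ) * if ∀ v, (π v : ℕ) + (S v).toNat + (!T v).toNat = d v then 1 else 0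

theorem vandermonde_expand {R : Type*} [CommRing R] {n : ℕ} (x : Fin n → R) :
    ∏ a : Fin n, ∏ b ∈ Ioi a, (x b - x a) =
      ∑ π : Equiv.Perm (Fin n), ((Equiv.Perm.sign π : ℤ) : R) * ∏ v, x v ^ (π v : ℕ) := by
  rw [← Matrix.det_vandermonde, ← Matrix.det_transpose, Matrix.det_apply']
  rfl

theorem prod_sub_expand {V : Type*} [Fintype V] [DecidableEq V] {ι : Type*} (p q : V → ι) :
    ∏ v, (X (p v) - X (q v) : MvPolynomial ι ℝ) =
      ∑ S : V → Bool, ∏ v, (C (choiceSign (S v)) * X (p v) ^ (S v).toNat *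
        X (q v) ^ (!S v).toNat) := by
  have h : ∀ v, (X (p v) - X (q v) : MvPolynomial ι ℝ) =
      ∑ b : Bool, C (choiceSign b) * X (p v) ^ b.toNat * X (q v) ^ (!b).toNat := by
    intro v
    simp [choiceSign, sub_eq_add_neg]
  simp only [h]
  rw [Finset.prod_univ_sum, Fintype.piFinset_univ]

theorem graphPoly_expand (n m : ℕ) (hm : 2 ≤ m) :
    graphPoly (boxOrientation n m hm) =
      ∑ S : Fin (m + 1) → Fin n → Bool, ∑ π : Fin (m + 1) → Equiv.Perm (Fin n),
        C (∏ i, ((∏ v, choiceSign (S i v)) * ((Equiv.Perm.sign (π i) : ℤ) : ℝ))) *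
          ∏ w : Fin n × Fin (m + 1),
            X w ^ ((π w.2 w.1 : ℕ) + (S w.2 w.1).toNat + (!S (w.2 + 1) w.1).toNat) := by
  rw [graphPoly_boxOrientation]
  simp only [vandermonde_expand, prod_sub_expand]
  rw [Finset.prod_univ_sum, Finset.prod_univ_sum, Fintype.piFinset_univ, Fintype.piFinset_univ,
    Finset.sum_mul_sum, Finset.sum_comm]
  refine Finset.sum_congr rfl fun S _ => Finset.sum_congr rfl fun π _ => ?_
  have hshift : ∏ i : Fin (m + 1), ∏ v : Fin n,
        (X (v, i - 1) ^ (!S i v).toNat : MvPolynomial (Fin n × Fin (m + 1)) ℝ) =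
      ∏ i : Fin (m + 1), ∏ v : Fin n, X (v, i) ^ (!S (i + 1) v).toNat := by
    rw [← Equiv.prod_comp (Equiv.addRight (1 : Fin (m + 1)))]
    simp
  rw [Fintype.prod_prod_type_right]
  simp only [pow_add, Finset.prod_mul_distrib, map_mul, map_prod, hshift]
  simp only [map_intCast]
  ring

theorem coeff_graphPoly (n m : ℕ) (hm : 2 ≤ m) (d : Fin n × Fin (m + 1) →₀ ℕ) :
    coeff d (graphPoly (boxOrientation n m hm)) =
      ∑ S : Fin (m + 1) → Fin n → Bool,
        ∏ i, layerMat (fun v => d (v, i)) (S i) (S (i + 1)) := by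
  rw [graphPoly_expand, coeff_sum]
  refine Finset.sum_congr rfl fun S _ => ?_
  simp only [layerMat, Matrix.of_apply, Finset.mul_sum]
  rw [Finset.prod_univ_sum, Fintype.piFinset_univ, coeff_sum]
  refine Finset.sum_congr rfl fun π _ => ?_
  have hmon : (∏ w : Fin n × Fin (m + 1),
      X w ^ ((π w.2 w.1 : ℕ) + (S w.2 w.1).toNat + (!S (w.2 + 1) w.1).toNat) :
        MvPolynomial (Fin n × Fin (m + 1)) ℝ) = monomial (Finsupp.equivFunOnFinite.symm
      fun w => (π w.2 w.1 : ℕ) + (S w.2 w.1).toNat + (!S (w.2 + 1) w.1).toNat) 1 := by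
    rw [monomial_eq, Finsupp.prod_fintype _ _ (by simp)]
    simp
  rw [hmon, coeff_C_mul, coeff_monomial]
  simp only [← mul_assoc]
  rw [Finset.prod_mul_distrib (f := fun i => (∏ v, choiceSign (S i v)) *
    ((Equiv.Perm.sign (π i) : ℤ) : ℝ)), Finset.prod_ite_zero]
  congr 1
  simp only [Finset.prod_const_one]
  refine if_congr ?_ rfl rfl
  rw [DFunLike.ext_iff]
  simp only [Finsupp.equivFunOnFinite_symm_apply_apply, Prod.forall, mem_univ, true_imp_iff]
  exact forall_comm

/-! ### Reflecting the transfer matrix -/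

/-- The base exponents: `0, …, n - 1` with the two extreme values moved inwards. -/
def baseExp (n : ℕ) (v : Fin n) : ℕ := max 1 (min v (n - 2))

/-- Comparing sums of exponents shows that the entering and leaving choices of a nonzero entry
select equally many vertices, so the signs in `layerMat` do not obstruct its transposition. -/
theorem choice_balance {n : ℕ} (hn : 3 ≤ n) (S T : Fin n → Bool) (π : Equiv.Perm (Fin n))
    (h : ∀ v, (π v : ℕ) + (S v).toNat + (!T v).toNat = baseExp n v + 1) :
    ∏ v, choiceSign (S v) = ∏ v, choiceSign (T v) := by
  have hsign : ∀ U : Fin n → Bool, ∏ v, choiceSign (U v) = (-1) ^ (∑ v, (!U v).toNat) := by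
    intro U
    rw [← Finset.prod_pow_eq_pow_sum]
    refine Finset.prod_congr rfl fun v _ => ?_
    cases U v <;> simp [choiceSign]
  have hcompl : ∀ U : Fin n → Bool, ∑ v, (U v).toNat + ∑ v, (!U v).toNat = n := by
    intro U
    rw [← Finset.sum_add_distrib]
    have : ∀ v, (U v).toNat + (!U v).toNat = 1 := fun v => by cases U v <;> rfl
    simp [this]
  have h1 : ∑ v, (π v : ℕ) + ∑ v, (S v).toNat + ∑ v, (!T v).toNat = ∑ v, baseExp n v + n := by
    simp only [← Finset.sum_add_distrib, h]
    simp [Finset.sum_add_distrib]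
  have h2 : ∑ v, (π v : ℕ) = ∑ v : Fin n, (v : ℕ) := Equiv.sum_comp π (fun v => (v : ℕ))
  have h3 : ∑ v : Fin n, (v : ℕ) = ∑ v, baseExp n v := by
    have h4 : ∑ v : Fin n, ((v : ℕ) + if v = ⟨0, by omega⟩ then 1 else 0) =
        ∑ v : Fin n, (baseExp n v + if v = ⟨n - 1, by omega⟩ then 1 else 0) := by
      refine Finset.sum_congr rfl fun v _ => ?_
      simp only [baseExp, Fin.ext_iff]
      have := v.2
      split_ifs <;> omega
    simpa [Finset.sum_add_distrib] using h4
  have h5 := hcompl S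
  rw [hsign, hsign]
  congr 1
  omega

/-- Composing the permutation with the reflection `j ↦ n - 1 - j` exchanges the roles of the
incoming and the outgoing choices. -/
theorem layerMat_reflect {n : ℕ} (hn : 3 ≤ n) :
    layerMat (fun v => n - baseExp n v) =
      ((Equiv.Perm.sign (Fin.revPerm : Equiv.Perm (Fin n)) : ℤ) : ℝ) •
        (layerMat fun v => baseExp n v + 1).transpose := by
  ext S T
  simp only [layerMat, Matrix.of_apply, Matrix.smul_apply, Matrix.transpose_apply, smul_eq_mul]
  rw [← Equiv.sum_comp (Equiv.mulLeft (Fin.revPerm : Equiv.Perm (Fin n)))]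
  simp only [Finset.mul_sum]
  refine Finset.sum_congr rfl fun π _ => ?_
  have hiff : (∀ v, (((Equiv.mulLeft Fin.revPerm) π) v : ℕ) + (S v).toNat + (!T v).toNat =
      n - baseExp n v) ↔ ∀ v, (π v : ℕ) + (T v).toNat + (!S v).toNat = baseExp n v + 1 := by
    refine forall_congr' fun v => ?_
    have h1 := (π v).2
    have h2 : baseExp n v ≤ n - 2 := by simp only [baseExp]; omega
    simp only [Equiv.coe_mulLeft, Equiv.Perm.coe_mul, Function.comp_apply, Fin.revPerm_apply,
      Fin.val_rev]
    cases S v <;> cases T v <;> simp <;> omega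
  simp only [hiff]
  split_ifs with h
  · rw [choice_balance hn T S π h]
    simp
    ring
  · simp

/-- The entry with `S` the bottom vertex and `T` the top vertex is realized by the identity
permutation alone, hence equals `±1`. -/
theorem layerMat_ne_zero {n : ℕ} (hn : 3 ≤ n) : layerMat (fun v => baseExp n v + 1) ≠ 0 := by
  have htrue : ∀ (p : Prop) [Decidable p], (decide p).toNat = if p then 1 else 0 := by
    intro p _; by_cases hp : p <;> simp [hp]
  have hfalse : ∀ (p : Prop) [Decidable p], (!decide p).toNat = if p then 0 else 1 := by
    intro p _; by_cases hp : p <;> simp [hp]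
  intro h0
  have h := congrFun (congrFun h0 fun v => decide ((v : ℕ) = 0))
    fun v => decide ((v : ℕ) = n - 1)
  simp only [layerMat, Matrix.of_apply, Matrix.zero_apply] at h
  rw [Finset.sum_eq_single 1] at h
  · rw [if_pos] at h
    · simp [Finset.prod_eq_zero_iff, choiceSign] at h
      obtain ⟨v, hv⟩ := h
      split_ifs at hv <;> simp at hv
    · intro v
      have := v.2
      simp only [baseExp, Equiv.Perm.coe_one, id]
      rw [htrue, hfalse]
      split_ifs <;> omega
  · intro π _ hπ
    rw [if_neg, mul_zero]
    intro h
    apply hπ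
    ext v
    have h3 := h v
    have := v.2
    rw [htrue, hfalse, baseExp] at h3
    simp only [Equiv.Perm.coe_one, id]
    split_ifs at h3 <;> omega
  · simp

/-- For every `n ≥ 3` and `k ≥ 2`,
`AT(K_n □ C_{2k}) = ch(K_n □ C_{2k}) = n`. -/
theorem stmt11 (n : ℕ) (hn : 3 ≤ n) (k : ℕ) (hk : 2 ≤ k) :
    ATNumber ((⊤ : SimpleGraph (Fin n)).boxProd (SimpleGraph.cycleGraph (2 * k))) = n ∧
      chNumber ((⊤ : SimpleGraph (Fin n)).boxProd (SimpleGraph.cycleGraph (2 * k))) = n := by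
  obtain ⟨m, hm⟩ : ∃ m, 2 * k = m + 1 := ⟨2 * k - 1, by omega⟩
  rw [hm]
  let d : Fin n × Fin (m + 1) →₀ ℕ := Finsupp.equivFunOnFinite.symm fun w =>
    if Even (w.2 : ℕ) then baseExp n w.1 + 1 else n - baseExp n w.1
  refine at_eq_ch_eq (fun a => (a, 0)) ?_ (boxOrientation n m (by omega)) d ?_ ?_ (by omega)
  · intro a b hab
    rw [SimpleGraph.boxProd_adj]
    exact Or.inl ⟨hab, rfl⟩
  · rw [coeff_graphPoly]
    let M := layerMat fun v => baseExp n v + 1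
    let s : ℝ := ((Equiv.Perm.sign (Fin.revPerm : Equiv.Perm (Fin n)) : ℤ) : ℝ)
    have hW : ∀ i : Fin (m + 1), layerMat (fun v => d (v, i)) =
        (fun i : ℕ => if Even i then M else s • M.transpose) i := by
      intro i
      by_cases hi : Even (i : ℕ)
      · simp [d, hi, M]
      · simp only [d, hi, M, s, ← layerMat_reflect hn, if_false,
          Finsupp.equivFunOnFinite_symm_apply_apply]
    rw [Finset.sum_congr rfl fun f _ => Finset.prod_congr rfl fun i _ => by rw [hW i]]
    rw [← trace_walkProd (fun i => if Even i then M else s • M.transpose), ← hm, walkProd_alternating, Matrix.trace_smul, smul_eq_mul]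
    refine mul_ne_zero (pow_ne_zero _ ?_)
      (pow_mul_transpose_trace_ne_zero M (layerMat_ne_zero hn) k)
    exact Int.cast_ne_zero.2 (Units.ne_zero _)
  · rintro ⟨v, i⟩
    simp only [d, Finsupp.equivFunOnFinite_symm_apply_apply, baseExp]
    split_ifs <;> omega
end
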